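/- Let a ≤ b ≤ τ be positive integers with a | b and τ + 1 ≥ a + b, and set ℓ = b/a, ρ = τ+1, r = b, n = τ+1−a+b, k = τ+1−a. Let F be a field, Z = [Z1 | Z2] an a×2a zero-band MDS generator matrix over F, C an r×(ρ−r) super-regular matrix over F, and H the r×n parity-check matrix of the code C_{a,b,τ+1} of Construction 1. Then the diagonal embedding of ker H (i.e., SDE(ker H, S) with N = n and S = {0,1,…,n−1}) is an (a,b,τ) streaming code, and its rate k/n equals the optimal rate (τ+1−a)/(τ+1−a+b). -/

import Mathlib

/-- The parity-check matrix `H` of the code `C_{a,r,ρ}` of Construction 1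
(with `r = ℓa`): `H(0:a−1, 0:a−1) = I_a`; `H(ia:ia+a−1, ia:ia+a−1) = Z1` for
`i ∈ {1,…,ℓ−1}`; `H(0:r−1, r:ρ−1) = C`;
`H(ia:ia+a−1, ρ+(i−1)a:ρ+ia−1) = Z2` for `i ∈ {1,…,ℓ−1}`; all other entries
zero. -/
def constructionOneH (F : Type*) [Field F] (a ℓ ρ : ℕ) (ha : 0 < a)
    (Z1 Z2 : Matrix (Fin a) (Fin a) F)
    (C : Matrix (Fin (ℓ * a)) (Fin (ρ - ℓ * a)) F) :
    Matrix (Fin (ℓ * a)) (Fin (ρ - a + ℓ * a)) F :=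
  Matrix.of fun u v =>
    if hv1 : (v : ℕ) < ℓ * a then
      if (u : ℕ) / a = (v : ℕ) / a then
        if (v : ℕ) < a then (if (u : ℕ) = (v : ℕ) then 1 else 0)
        else Z1 ⟨(u : ℕ) % a, Nat.mod_lt _ ha⟩ ⟨(v : ℕ) % a, Nat.mod_lt _ ha⟩
      else 0
    else if hv2 : (v : ℕ) < ρ then
      C u ⟨(v : ℕ) - ℓ * a, by omega⟩
    else
      if (u : ℕ) / a = ((v : ℕ) - ρ) / a + 1 then
        Z2 ⟨(u : ℕ) % a, Nat.mod_lt _ ha⟩ ⟨((v : ℕ) - ρ) % a, Nat.mod_lt _ ha⟩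
      else 0

/-! On a diagonal, the difference of two packet streams is a codeword `c` that vanishes before the
current position `i` and, up to `i + τ`, outside the erasures, and the claim is `c i = 0`. By
super-regularity the part of `c` under `C` vanishes as soon as its weight is at most the number of
rows of `H` whose other entries of `c` are known to be zero. In the first `a` rows there is only one
other entry. For a burst the zero band gives more such rows: row `u` of a later block sees only the
positions up to `u` in the left part and from `ρ + u - a` on in the right part. What remains of each
later block is `Z₁ v + Z₂ w = 0` with `(v, w)` of weight at most `a`, so `v = w = 0` by the MDS
property. -/

section DiagonalEmbedding

variable {n : ℕ} {A : Type*}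

/-- A set of packet streams is an `(a, b, τ)` streaming code if the packet sent at time `t` is
recovered by time `t + τ` from all earlier packets, when at most `a` packets or only packets of a
burst of length `b` are erased among those sent at the times `t, …, t + τ`. -/
def IsStreamingCode (a b τ : ℕ) (𝒞 : Set (ℤ → A)) : Prop :=
  ∀ (t : ℤ) (E : Finset ℤ), ↑E ⊆ Set.Icc t (t + (τ : ℤ)) → t ∈ E →
    (E.card ≤ a ∨ ∀ e ∈ E, e ≤ t + (b : ℤ) - 1) →
    ∀ x ∈ 𝒞, ∀ y ∈ 𝒞, (∀ t' : ℤ, t' < t → x t' = y t') →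
      (∀ t' : ℤ, t' ∈ Set.Icc t (t + (τ : ℤ)) → t' ∉ E → x t' = y t') → x t = y t

/-- The diagonal embedding of a block code: the packet streams all of whose diagonals are
codewords. -/
def diagonalEmbedding (D : Set (Fin n → A)) : Set (ℤ → Fin n → A) :=
  {x | ∀ s : ℤ, (fun i : Fin n => x (s + ((i : ℕ) : ℤ)) i) ∈ D}

/-- The block-code counterpart of `IsStreamingCode`, for linear codes: a codeword vanishes at `i`
as soon as it vanishes at the positions up to `i + τ` outside an erasure pattern `T` that starts no
earlier than `i` and has at most `a` elements or lies in a burst of length `b`. -/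
def IsDelayRecoverable [Zero A] (a b τ : ℕ) (D : Set (Fin n → A)) : Prop :=
  ∀ (i : Fin n) (T : Finset (Fin n)), (∀ j ∈ T, i ≤ j) →
    (T.card ≤ a ∨ ∀ j ∈ T, (j : ℕ) < i + b) →
    ∀ c ∈ D, (∀ j : Fin n, (j : ℕ) ≤ i + τ → j ∉ T → c j = 0) → c i = 0

theorem IsDelayRecoverable.isStreamingCode_diagonalEmbedding [AddCommGroup A] {a b τ : ℕ}
    {D : AddSubgroup (Fin n → A)} (hD : IsDelayRecoverable a b τ (D : Set (Fin n → A))) :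
    IsStreamingCode a b τ (diagonalEmbedding (D : Set (Fin n → A))) := by
  intro t E hE _ hEab x hx y hy hpast hfuture
  funext i
  let time (j : Fin n) : ℤ := t - (i : ℕ) + (j : ℕ)
  let erased : Finset (Fin n) := {j | time j ∈ E}
  have erased_ge : ∀ j ∈ erased, i ≤ j := by
    intro j hj
    have := (hE (Finset.mem_filter.1 hj).2).1
    grind
  have erased_pattern : erased.card ≤ a ∨ ∀ j ∈ erased, (j : ℕ) < i + b := by
    refine hEab.imp (fun hcard => ?_) (fun hburst j hj => ?_)
    · refine (Finset.card_le_card_of_injOn time (by simp [erased, Set.MapsTo]) ?_).trans hcard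
      intro j _ k _ hjk
      grind
    · have := hburst _ (Finset.mem_filter.1 hj).2
      grind
  have agree : ∀ j : Fin n, (j : ℕ) ≤ i + τ → j ∉ erased → x (time j) = y (time j) := by
    intro j hj hjE
    rcases lt_or_ge (time j) t with hlt | hge
    · exact hpast _ hlt
    · exact hfuture _ ⟨hge, by grind⟩ (by simpa [erased] using hjE)
  have := hD i erased erased_ge erased_pattern (fun j => x (time j) j - y (time j) j)
    (D.sub_mem (hx _) (hy _)) (fun j hj hjE => by rw [agree j hj hjE, sub_self])
  simpa [time, sub_eq_zero] using this

end DiagonalEmbedding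

section Windows

variable {M : Type*}

/-- The `k` consecutive entries of `c` that start at position `s`. -/
def window (c : ℕ → M) (s k : ℕ) : Fin k → M := fun q => c (s + q)

/-- The extension by zero of a vector to a sequence, which makes all its windows available without
bounds on the positions. -/
def extendByZero [Zero M] {n : ℕ} (v : Fin n → M) (j : ℕ) : M := if h : j < n then v ⟨j, h⟩ else 0

@[simp]
theorem extendByZero_val [Zero M] {n : ℕ} (v : Fin n → M) (j : Fin n) : extendByZero v j = v j := by
  simp [extendByZero]

variable [Zero M] [DecidableEq M] {c : ℕ → M} {s k : ℕ}

theorem hammingNorm_window (c : ℕ → M) (s k : ℕ) :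
    hammingNorm (window c s k) = (Finset.filter (c · ≠ 0) (Finset.Ico s (s + k))).card := by
  refine Finset.card_bij (fun q _ => s + q) ?_ ?_ ?_
  · intro q hq
    have hcq : c (s + q) ≠ 0 := (Finset.mem_filter.1 hq).2
    simpa using hcq
  · intro p _ q _ h
    exact Fin.ext (Nat.add_left_cancel h)
  · intro j hj
    obtain ⟨⟨hs, hk⟩, hcj⟩ : (s ≤ j ∧ j < s + k) ∧ c j ≠ 0 := by simpa using hj
    have hsj : s + (j - s) = j := Nat.add_sub_cancel' hs
    refine ⟨⟨j - s, by lia⟩, Finset.mem_filter.2 ⟨Finset.mem_univ _, ?_⟩, hsj⟩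
    simpa only [window, hsj] using hcj

theorem hammingNorm_window_le {l r : ℕ}
    (hc : ∀ j ∈ Finset.Ico s (s + k), j ∉ Finset.Ico l r → c j = 0) :
    hammingNorm (window c s k) ≤ min (s + k) r - max s l := by
  rw [hammingNorm_window, ← Nat.card_Ico]
  refine Finset.card_le_card fun j hj => ?_
  have := hc j
  grind

theorem hammingNorm_window_add_le_card {s' k' : ℕ} {T : Finset ℕ} (hs : s + k ≤ s')
    (hc : ∀ j < s' + k', j ∉ T → c j = 0) :
    hammingNorm (window c s k) + hammingNorm (window c s' k') ≤ T.card := by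
  rw [hammingNorm_window, hammingNorm_window, ← Finset.card_union_of_disjoint]
  · refine Finset.card_le_card fun j hj => ?_
    have := hc j
    grind
  · exact Finset.disjoint_left.2 fun j => by grind

end Windows

theorem hammingNorm_sumElim {m n M : Type*} [Fintype m] [Fintype n] [Zero M] [DecidableEq M]
    (v : m → M) (w : n → M) :
    hammingNorm (Sum.elim v w) = hammingNorm v + hammingNorm w := by
  simp only [hammingNorm, Finset.card_filter, Fintype.sum_sum_type]
  rfl

section MatrixClasses

open Matrix

section Halves

variable {R : Type*} {a : ℕ}

/-- The zero-band condition: in row `i` the `a - 1` columns following column `i` cyclically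
vanish. -/
def IsZeroBand [Zero R] (Z : Matrix (Fin a) (Fin (2 * a)) R) : Prop :=
  ∀ (i : Fin a) (j : Fin (2 * a)),
    (∃ s : ℕ, 1 ≤ s ∧ s ≤ a - 1 ∧ (j : ℕ) = ((i : ℕ) + s) % (2 * a)) → Z i j = 0

/-- The left half `Z₁` of `Z = [Z₁ | Z₂]`. -/
def leftHalf (Z : Matrix (Fin a) (Fin (2 * a)) R) : Matrix (Fin a) (Fin a) R :=
  of fun i j => Z i ⟨(j : ℕ), by have := j.isLt; omega⟩

/-- The right half `Z₂` of `Z = [Z₁ | Z₂]`. -/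
def rightHalf (Z : Matrix (Fin a) (Fin (2 * a)) R) : Matrix (Fin a) (Fin a) R :=
  of fun i j => Z i ⟨a + (j : ℕ), by have := j.isLt; omega⟩

variable [NonUnitalNonAssocSemiring R] {Z : Matrix (Fin a) (Fin (2 * a)) R} {v : Fin a → R}
  {i : Fin a}

theorem IsZeroBand.leftHalf_mulVec_apply_eq_zero (hZ : IsZeroBand Z) (hv : ∀ j ≤ i, v j = 0) :
    (leftHalf Z *ᵥ v) i = 0 := by
  rw [mulVec, dotProduct]
  refine Finset.sum_eq_zero fun j _ => ?_
  rcases le_or_gt j i with hji | hij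
  · rw [hv j hji, mul_zero]
  · have : leftHalf Z i j = 0 := hZ i _ ⟨j - i, by lia, by lia, by rw [Nat.mod_eq_of_lt] <;> grind⟩
    rw [this, zero_mul]

theorem IsZeroBand.rightHalf_mulVec_apply_eq_zero (hZ : IsZeroBand Z) (hv : ∀ j ≥ i, v j = 0) :
    (rightHalf Z *ᵥ v) i = 0 := by
  rw [mulVec, dotProduct]
  refine Finset.sum_eq_zero fun j _ => ?_
  rcases le_or_gt i j with hij | hji
  · rw [hv j hij, mul_zero]
  · have : rightHalf Z i j = 0 :=
      hZ i _ ⟨a + j - i, by lia, by lia, by rw [Nat.mod_eq_of_lt] <;> grind⟩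
    rw [this, zero_mul]

end Halves

variable {m n R : Type*} [CommRing R]

/-- Super-regularity: all square submatrices have nonzero determinant, which over a field means
that they are invertible. -/
def IsSuperregular (C : Matrix m n R) : Prop :=
  ∀ (s : ℕ) (ri : Fin s → m) (ci : Fin s → n),
    Function.Injective ri → Function.Injective ci → (C.submatrix ri ci).det ≠ 0

theorem IsSuperregular.eq_zero_of_hammingNorm_le [IsDomain R] [DecidableEq R] [Fintype n]
    {C : Matrix m n R} (hC : IsSuperregular C) {v : n → R} {rows : Finset m}
    (hv : ∀ u ∈ rows, (C *ᵥ v) u = 0) (hcard : hammingNorm v ≤ rows.card) : v = 0 := by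
  classical
  let support : Finset n := {j | v j ≠ 0}
  obtain ⟨rows', hsub, hcard'⟩ := Finset.exists_subset_card_eq hcard
  let ri : Fin support.card → m := fun k => rows'.equivFinOfCardEq hcard' |>.symm k
  let ci : Fin support.card → n := fun k => support.equivFin.symm k
  have hdet := hC _ ri ci (Subtype.val_injective.comp (Equiv.injective _))
    (Subtype.val_injective.comp (Equiv.injective _))
  have hker : C.submatrix ri ci *ᵥ (v ∘ ci) = 0 := by
    ext k
    calc ∑ l, C (ri k) (ci l) * v (ci l) = ∑ j : support, C (ri k) j * v j :=
          support.equivFin.symm.sum_comp fun j : support => C (ri k) j * v j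
      _ = ∑ j ∈ support, C (ri k) j * v j := Finset.sum_coe_sort support fun j => C (ri k) j * v j
      _ = (C *ᵥ v) (ri k) :=
          Finset.sum_subset (Finset.subset_univ _) fun j _ hj => by
            rw [show v j = 0 by simpa [support] using hj, mul_zero]
      _ = 0 := hv _ (hsub (Subtype.property _))
  have hzero := eq_zero_of_mulVec_eq_zero hdet hker
  by_contra hne
  obtain ⟨j, hj⟩ := Function.ne_iff.1 hne
  have hj' : j ∈ support := by simpa [support] using hj
  exact hj (by simpa [ci] using congrFun hzero (support.equivFin ⟨j, hj'⟩))

/-- The generator matrices of MDS codes: the columns in any set with as many elements as there are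
rows are linearly independent. -/
def IsMDSGenerator [Fintype m] (Z : Matrix m n R) : Prop :=
  ∀ cols : Finset n, cols.card = Fintype.card m →
    LinearIndependent R (fun j : cols => fun u => Z u (j : n))

namespace IsMDSGenerator

variable [Fintype m] {Z : Matrix m n R}

theorem submatrix {n' : Type*} (hZ : IsMDSGenerator Z) (e : n' ↪ n) :
    IsMDSGenerator (Z.submatrix id e) := fun cols hcols =>
  (hZ (cols.map e) (by simpa using hcols)).comp
    (fun j : cols => ⟨e j, Finset.mem_map_of_mem e j.2⟩)
    fun _ _ hjk => Subtype.ext (e.injective (congrArg Subtype.val hjk))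

theorem eq_zero_of_hammingNorm_le [DecidableEq R] [Fintype n] (hZ : IsMDSGenerator Z)
    (hmn : Fintype.card m ≤ Fintype.card n) {w : n → R} (hw : Z *ᵥ w = 0)
    (hcard : hammingNorm w ≤ Fintype.card m) : w = 0 := by
  obtain ⟨cols, hsub, hcols⟩ := Finset.exists_superset_card_eq hcard (by simpa using hmn)
  have hout : ∀ j ∉ cols, w j = 0 := fun j hj => by
    by_contra h
    exact hj (hsub (by simpa using h))
  have hrel : ∑ j : cols, w j • (fun u => Z u j) = 0 := by
    ext u
    calc (∑ j : cols, w j • (fun u => Z u j)) u = ∑ j : cols, Z u j * w j := by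
          simp [mul_comm]
      _ = ∑ j ∈ cols, Z u j * w j := Finset.sum_coe_sort cols fun j => Z u j * w j
      _ = (Z *ᵥ w) u :=
          Finset.sum_subset (Finset.subset_univ _) fun j _ hj => by rw [hout j hj, mul_zero]
      _ = 0 := congrFun hw u
  have hin := Fintype.linearIndependent_iff.1 (hZ cols hcols) (fun j => w j) hrel
  funext j
  by_cases hj : j ∈ cols
  · exact hin ⟨j, hj⟩
  · exact hout j hj

end IsMDSGenerator

theorem IsMDSGenerator.eq_zero_of_halves_mulVec_add_eq_zero [DecidableEq R] {a : ℕ}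
    {Z : Matrix (Fin a) (Fin (2 * a)) R} (hZ : IsMDSGenerator Z) {v w : Fin a → R}
    (hvw : leftHalf Z *ᵥ v + rightHalf Z *ᵥ w = 0)
    (hcard : hammingNorm v + hammingNorm w ≤ a) : v = 0 ∧ w = 0 := by
  let e : Fin a ⊕ Fin a ≃ Fin (2 * a) := finSumFinEquiv.trans (finCongr (two_mul a).symm)
  have hsplit : Z.submatrix id e = fromCols (leftHalf Z) (rightHalf Z) := by
    ext i (j | j) <;> simp only [submatrix_apply, id, fromCols_apply_inl, fromCols_apply_inr,
      leftHalf, rightHalf, of_apply]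
    · rfl
    · rfl
  have hZ' : IsMDSGenerator (fromCols (leftHalf Z) (rightHalf Z)) :=
    hsplit ▸ hZ.submatrix e.toEmbedding
  have helim : Sum.elim v w = 0 :=
    hZ'.eq_zero_of_hammingNorm_le (by simp) (by rwa [fromCols_mulVec_sumElim])
      (by simpa [hammingNorm_sumElim] using hcard)
  exact ⟨funext fun q => congrFun helim (.inl q), funext fun q => congrFun helim (.inr q)⟩

end MatrixClasses

namespace constructionOneH

open Matrix

/-- The columns of `H`, in order: `ℓ + 1` blocks of `a` columns, the columns of `C`, and another
`ℓ` blocks of `a` columns. -/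
def columnEquiv {a ℓ ρ : ℕ} (hρ : (ℓ + 1) * a ≤ ρ) :
    ((Fin (ℓ + 1) × Fin a) ⊕ Fin (ρ - (ℓ + 1) * a)) ⊕ (Fin ℓ × Fin a) ≃
      Fin (ρ - a + (ℓ + 1) * a) :=
  ((((finProdFinEquiv.sumCongr (.refl _)).trans finSumFinEquiv).sumCongr finProdFinEquiv).trans
    finSumFinEquiv).trans (finCongr (by grind))

section Rows

variable {F : Type*} [Field F] {a ℓ ρ : ℕ} {ha : 0 < a} {Z₁ Z₂ : Matrix (Fin a) (Fin a) F}
  {C : Matrix (Fin ((ℓ + 1) * a)) (Fin (ρ - (ℓ + 1) * a)) F}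

theorem coe_columnEquiv_left (hρ : (ℓ + 1) * a ≤ ρ) (k : Fin (ℓ + 1)) (q : Fin a) :
    (columnEquiv hρ (.inl (.inl (k, q))) : ℕ) = a * k + q := by
  simp [columnEquiv, add_comm]

theorem coe_columnEquiv_middle (hρ : (ℓ + 1) * a ≤ ρ) (j : Fin (ρ - (ℓ + 1) * a)) :
    (columnEquiv hρ (.inl (.inr j)) : ℕ) = (ℓ + 1) * a + j := by
  simp [columnEquiv]

theorem coe_columnEquiv_right (hρ : (ℓ + 1) * a ≤ ρ) (k : Fin ℓ) (q : Fin a) :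
    (columnEquiv hρ (.inr (k, q)) : ℕ) = ρ + (a * k + q) := by
  simp only [columnEquiv, Equiv.trans_apply, Equiv.sumCongr_apply, Sum.map_inr,
    finSumFinEquiv_apply_right, finCongr_apply_coe, Fin.val_natAdd, finProdFinEquiv_apply_val]
  grind

theorem mul_add_val_div (k : ℕ) (q : Fin a) : (a * k + q) / a = k := by
  rw [Nat.mul_add_div q.pos, Nat.div_eq_of_lt q.isLt, add_zero]

theorem mul_add_val_mod (k : ℕ) (q : Fin a) : (a * k + q) % a = q := by
  rw [Nat.mul_add_mod, Nat.mod_eq_of_lt q.isLt]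

theorem mul_succ_add_le (a : ℕ) (k : Fin ℓ) : a * (k + 1) + a ≤ (ℓ + 1) * a := by
  rw [← Nat.mul_succ, mul_comm]
  exact Nat.mul_le_mul_right a (Nat.succ_le_succ k.isLt)

theorem coe_row (m : Fin (ℓ + 1)) (p : Fin a) :
    (finProdFinEquiv (m, p) : ℕ) = a * m + p :=
  add_comm _ _

theorem apply_left (hρ : (ℓ + 1) * a ≤ ρ) (m k : Fin (ℓ + 1)) (p q : Fin a) :
    constructionOneH F a (ℓ + 1) ρ ha Z₁ Z₂ C (finProdFinEquiv (m, p))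
        (columnEquiv hρ (.inl (.inl (k, q)))) =
      if m = k then (if k = 0 then (1 : Matrix (Fin a) (Fin a) F) p q else Z₁ p q) else 0 := by
  have hk : a * k + q < (ℓ + 1) * a := by
    simpa [add_comm] using (finProdFinEquiv (k, q)).isLt
  have hk0 : a * k + q < a ↔ k = 0 := by
    rw [← Nat.div_eq_zero_iff_lt ha, mul_add_val_div, Fin.val_eq_zero_iff]
  simp only [constructionOneH, of_apply, coe_columnEquiv_left, coe_row, mul_add_val_div,
    mul_add_val_mod, dif_pos hk, hk0, one_apply, Fin.val_inj]
  split_ifs <;> grind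

theorem apply_middle (hρ : (ℓ + 1) * a ≤ ρ) (u : Fin ((ℓ + 1) * a))
    (j : Fin (ρ - (ℓ + 1) * a)) :
    constructionOneH F a (ℓ + 1) ρ ha Z₁ Z₂ C u (columnEquiv hρ (.inl (.inr j))) = C u j := by
  have hj : (ℓ + 1) * a + j < ρ := by lia
  simp [constructionOneH, coe_columnEquiv_middle, hj]

theorem apply_right (hρ : (ℓ + 1) * a ≤ ρ) (m : Fin (ℓ + 1)) (k : Fin ℓ) (p q : Fin a) :
    constructionOneH F a (ℓ + 1) ρ ha Z₁ Z₂ C (finProdFinEquiv (m, p))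
        (columnEquiv hρ (.inr (k, q))) = if m = k.succ then Z₂ p q else 0 := by
  have hk : ¬ ρ + (a * k + q) < ρ := by lia
  have hk' : ¬ ρ + (a * k + q) < (ℓ + 1) * a := by omega
  simp only [constructionOneH, of_apply, coe_columnEquiv_right, coe_row, mul_add_val_div,
    mul_add_val_mod, dif_neg hk, dif_neg hk', Nat.add_sub_cancel_left, Fin.ext_iff, Fin.val_succ]

theorem mulVec_apply (hρ : (ℓ + 1) * a ≤ ρ) (c : ℕ → F) (m : Fin (ℓ + 1)) (p : Fin a) :
    (constructionOneH F a (ℓ + 1) ρ ha Z₁ Z₂ C *ᵥ fun k => c k) (finProdFinEquiv (m, p)) =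
      ((if m = 0 then 1 else Z₁) *ᵥ window c (a * m) a) p +
        (C *ᵥ window c ((ℓ + 1) * a) (ρ - (ℓ + 1) * a)) (finProdFinEquiv (m, p)) +
        ∑ k : Fin ℓ, if m = k.succ then (Z₂ *ᵥ window c (ρ + a * k) a) p else 0 := by
  simp only [mulVec, dotProduct, window]
  rw [← (columnEquiv hρ).sum_comp, Fintype.sum_sum_type, Fintype.sum_sum_type,
    Fintype.sum_prod_type, Fintype.sum_prod_type, Fintype.sum_eq_single m]
  · simp only [apply_left, apply_middle, apply_right, coe_columnEquiv_left, coe_columnEquiv_middle,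
      coe_columnEquiv_right, add_assoc, if_true]
    congr! 3
    · split_ifs <;> rfl
    · split_ifs <;> simp
  · intro k hk
    simp [apply_left, hk.symm]

theorem mulVec_apply_zero (hρ : (ℓ + 1) * a ≤ ρ) (c : ℕ → F) (p : Fin a) :
    (constructionOneH F a (ℓ + 1) ρ ha Z₁ Z₂ C *ᵥ fun k => c k) (finProdFinEquiv (0, p)) =
      c p + (C *ᵥ window c ((ℓ + 1) * a) (ρ - (ℓ + 1) * a)) (finProdFinEquiv (0, p)) := by
  simp [mulVec_apply hρ, window, (Fin.succ_ne_zero _).symm]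

theorem mulVec_apply_succ (hρ : (ℓ + 1) * a ≤ ρ) (c : ℕ → F) (k : Fin ℓ) (p : Fin a) :
    (constructionOneH F a (ℓ + 1) ρ ha Z₁ Z₂ C *ᵥ fun k => c k) (finProdFinEquiv (k.succ, p)) =
      (Z₁ *ᵥ window c (a * (k + 1)) a) p +
        (C *ᵥ window c ((ℓ + 1) * a) (ρ - (ℓ + 1) * a)) (finProdFinEquiv (k.succ, p)) +
        (Z₂ *ᵥ window c (ρ + a * k) a) p := by
  simp [mulVec_apply hρ, Fin.succ_ne_zero]

theorem mulVec_middle_eq_zero_of_burst {i : ℕ} {c : ℕ → F} {Z : Matrix (Fin a) (Fin (2 * a)) F}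
    (hρ : (ℓ + 1) * a ≤ ρ) (hZ : IsZeroBand Z)
    (hker : (constructionOneH F a (ℓ + 1) ρ ha (leftHalf Z) (rightHalf Z) C *ᵥ fun k => c k) = 0)
    (hc : ∀ j < i + ρ, j ∉ Finset.Ico i (i + (ℓ + 1) * a) → c j = 0)
    {u : Fin ((ℓ + 1) * a)} (hui : u < i)
    (hu : u < a ∨ i + a + (ℓ + 1) * a ≤ ρ + u) :
    (C *ᵥ window c ((ℓ + 1) * a) (ρ - (ℓ + 1) * a)) u = 0 := by
  obtain ⟨⟨m, p⟩, rfl⟩ := finProdFinEquiv.surjective u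
  rw [coe_row] at hui hu
  cases m using Fin.cases with
  | zero =>
    have hcp : c p = 0 := hc _ (by omega) (by grind)
    have hrow := (mulVec_apply_zero hρ c p).symm.trans (congrFun hker _)
    rwa [hcp, zero_add] at hrow
  | succ k =>
    rw [Fin.val_succ] at hui hu
    have hk_succ := mul_add_one a (k : ℕ)
    have hleft : (leftHalf Z *ᵥ window c (a * (k + 1)) a) p = 0 :=
      hZ.leftHalf_mulVec_apply_eq_zero fun q hq => hc _ (by omega) <| by
        rw [Finset.mem_Ico]
        omega
    have hright : (rightHalf Z *ᵥ window c (ρ + a * k) a) p = 0 :=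
      hZ.rightHalf_mulVec_apply_eq_zero fun q hq => hc _ (by omega) <| by
        rw [Finset.mem_Ico]
        omega
    have hrow := (mulVec_apply_succ hρ c k p).symm.trans (congrFun hker _)
    rwa [hleft, hright, zero_add, add_zero] at hrow

end Rows

section Recovery

variable {F : Type*} [Field F] {a ℓ ρ i : ℕ} {ha : 0 < a} {c : ℕ → F}
  {C : Matrix (Fin ((ℓ + 1) * a)) (Fin (ρ - (ℓ + 1) * a)) F}

theorem middle_eq_zero_of_hammingNorm_le [DecidableEq F] {Z₁ Z₂ : Matrix (Fin a) (Fin a) F}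
    (hρ : (ℓ + 1) * a ≤ ρ) (hC : IsSuperregular C)
    (hker : (constructionOneH F a (ℓ + 1) ρ ha Z₁ Z₂ C *ᵥ fun k => c k) = 0)
    (hcard : hammingNorm (window c 0 a) +
      hammingNorm (window c ((ℓ + 1) * a) (ρ - (ℓ + 1) * a)) ≤ a) :
    window c ((ℓ + 1) * a) (ρ - (ℓ + 1) * a) = 0 := by
  let clean : Finset (Fin a) := {p | c p = 0}
  let row : Fin a ↪ Fin ((ℓ + 1) * a) :=
    ⟨fun p => finProdFinEquiv (0, p), fun p q h => by simpa using h⟩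
  refine hC.eq_zero_of_hammingNorm_le (rows := clean.map row) ?_ ?_
  · simp only [Finset.forall_mem_map]
    intro p hp
    have hcp : c p = 0 := by simpa [clean] using hp
    have hrow := (mulVec_apply_zero hρ c p).symm.trans (congrFun hker _)
    rwa [hcp, zero_add] at hrow
  · have hsplit : clean.card + hammingNorm (window c 0 a) = a := by
      simpa [hammingNorm, window, clean] using
        Finset.card_filter_add_card_filter_not (s := Finset.univ) fun p : Fin a => c p = 0
    rw [Finset.card_map]
    lia

theorem blocks_eq_zero_of_hammingNorm_le [DecidableEq F] {Z : Matrix (Fin a) (Fin (2 * a)) F}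
    (hρ : (ℓ + 1) * a ≤ ρ) (hZ : IsMDSGenerator Z)
    (hker : (constructionOneH F a (ℓ + 1) ρ ha (leftHalf Z) (rightHalf Z) C *ᵥ fun k => c k) = 0)
    (hmiddle : window c ((ℓ + 1) * a) (ρ - (ℓ + 1) * a) = 0) (k : Fin ℓ)
    (hcard : hammingNorm (window c (a * (k + 1)) a) + hammingNorm (window c (ρ + a * k) a) ≤ a) :
    window c (a * (k + 1)) a = 0 ∧ window c (ρ + a * k) a = 0 := by
  refine hZ.eq_zero_of_halves_mulVec_add_eq_zero (funext fun p => ?_) hcard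
  have hrow := (mulVec_apply_succ hρ c k p).symm.trans (congrFun hker _)
  rwa [hmiddle, mulVec_zero, Pi.zero_apply, add_zero] at hrow

theorem apply_eq_zero_of_middle_eq_zero [DecidableEq F] {Z : Matrix (Fin a) (Fin (2 * a)) F}
    (hρ : (ℓ + 1) * a ≤ ρ) (hZ : IsMDSGenerator Z)
    (hker : (constructionOneH F a (ℓ + 1) ρ ha (leftHalf Z) (rightHalf Z) C *ᵥ fun k => c k) = 0)
    (hmiddle : window c ((ℓ + 1) * a) (ρ - (ℓ + 1) * a) = 0) (hi : i < ρ)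
    (hcard : ∀ k : Fin ℓ, a * (k + 1) ≤ i → i < a * (k + 1) + a →
      hammingNorm (window c (a * (k + 1)) a) + hammingNorm (window c (ρ + a * k) a) ≤ a) :
    c i = 0 := by
  rcases lt_or_ge i ((ℓ + 1) * a) with hlt | hge
  · obtain ⟨⟨m, p⟩, hmp⟩ := finProdFinEquiv.surjective (⟨i, hlt⟩ : Fin ((ℓ + 1) * a))
    obtain rfl : a * m + p = i := (coe_row m p).symm.trans (congrArg Fin.val hmp)
    cases m using Fin.cases with
    | zero =>
      have hrow := (mulVec_apply_zero hρ c p).symm.trans (congrFun hker _)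
      simpa [hmiddle] using hrow
    | succ k =>
      have hblock := blocks_eq_zero_of_hammingNorm_le hρ hZ hker hmiddle k
        (hcard k (by simp) (by simp))
      simpa [window] using congrFun hblock.1 p
  · have := congrFun hmiddle ⟨i - (ℓ + 1) * a, by lia⟩
    rwa [window, Nat.add_sub_cancel' hge] at this

theorem apply_eq_zero_of_card_le {Z : Matrix (Fin a) (Fin (2 * a)) F}
    (hρ : (ℓ + 1) * a ≤ ρ) (hZ : IsMDSGenerator Z) (hC : IsSuperregular C)
    (hker : (constructionOneH F a (ℓ + 1) ρ ha (leftHalf Z) (rightHalf Z) C *ᵥ fun k => c k) = 0)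
    (hi : i < ρ) {T : Finset ℕ} (hT : T.card ≤ a) (hc : ∀ j < i + ρ, j ∉ T → c j = 0) :
    c i = 0 := by
  classical
  have ha_le : a ≤ (ℓ + 1) * a := Nat.le_mul_of_pos_left a ℓ.succ_pos
  have hmiddle := middle_eq_zero_of_hammingNorm_le hρ hC hker
    ((hammingNorm_window_add_le_card (by omega) fun j hj => hc j (by omega)).trans hT)
  refine apply_eq_zero_of_middle_eq_zero hρ hZ hker hmiddle hi fun k hki _ => ?_
  have hk := mul_succ_add_le a k
  have hk_succ := mul_add_one a (k : ℕ)
  exact (hammingNorm_window_add_le_card (by omega) fun j hj => hc j (by omega)).trans hT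

theorem middle_eq_zero_of_burst {Z : Matrix (Fin a) (Fin (2 * a)) F}
    (hρ : a + (ℓ + 1) * a ≤ ρ) (hZ : IsZeroBand Z) (hC : IsSuperregular C)
    (hker : (constructionOneH F a (ℓ + 1) ρ ha (leftHalf Z) (rightHalf Z) C *ᵥ fun k => c k) = 0)
    (hi : i < ρ) (hc : ∀ j < i + ρ, j ∉ Finset.Ico i (i + (ℓ + 1) * a) → c j = 0) :
    window c ((ℓ + 1) * a) (ρ - (ℓ + 1) * a) = 0 := by
  classical
  have ha_le : a ≤ (ℓ + 1) * a := Nat.le_mul_of_pos_left a ℓ.succ_pos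
  -- The rows whose entries outside the columns of `C` are all known to vanish: those of the first
  -- block, and those whose zero band covers what the burst leaves unknown.
  let lower : Finset ℕ := Finset.range (min i a)
  let upper : Finset ℕ := Finset.Ico (max a (i + a + (ℓ + 1) * a - ρ)) (min i ((ℓ + 1) * a))
  have hlt : ∀ u ∈ lower ∪ upper, u < (ℓ + 1) * a := by grind
  refine hC.eq_zero_of_hammingNorm_le (rows := (lower ∪ upper).attachFin hlt) ?_ ?_
  · intro u hu
    rw [Finset.mem_attachFin] at hu
    exact mulVec_middle_eq_zero_of_burst (by lia) hZ hker hc (by grind) (by grind)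
  · have hdisjoint : Disjoint lower upper := Finset.disjoint_left.2 fun u => by grind
    have hnorm := hammingNorm_window_le (c := c) (s := (ℓ + 1) * a) (k := ρ - (ℓ + 1) * a)
      fun j hj => hc j (by grind)
    rw [Finset.card_attachFin, Finset.card_union_of_disjoint hdisjoint, Finset.card_range,
      Nat.card_Ico]
    omega

theorem apply_eq_zero_of_burst {Z : Matrix (Fin a) (Fin (2 * a)) F}
    (hρ : a + (ℓ + 1) * a ≤ ρ) (hband : IsZeroBand Z) (hZ : IsMDSGenerator Z)
    (hC : IsSuperregular C)
    (hker : (constructionOneH F a (ℓ + 1) ρ ha (leftHalf Z) (rightHalf Z) C *ᵥ fun k => c k) = 0)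
    (hi : i < ρ) (hc : ∀ j < i + ρ, j ∉ Finset.Ico i (i + (ℓ + 1) * a) → c j = 0) :
    c i = 0 := by
  classical
  have hmiddle := middle_eq_zero_of_burst hρ hband hC hker hi hc
  refine apply_eq_zero_of_middle_eq_zero (by lia) hZ hker hmiddle hi fun k hki hik => ?_
  have hleft := hammingNorm_window_le (c := c) (s := a * (k + 1)) (k := a)
    fun j hj => hc j (by grind)
  have hright := hammingNorm_window_le (c := c) (s := ρ + a * k) (k := a)
    fun j hj => hc j (by grind)
  grind

theorem apply_eq_zero_of_forall_lt {Z : Matrix (Fin a) (Fin (2 * a)) F}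
    (hρ : (ℓ + 1) * a ≤ ρ) (hZ : IsMDSGenerator Z)
    (hker : (constructionOneH F a (ℓ + 1) ρ ha (leftHalf Z) (rightHalf Z) C *ᵥ fun k => c k) = 0)
    (hi : ρ ≤ i) (hiℓ : i < ρ + ℓ * a) (hc : ∀ j < i, c j = 0) : c i = 0 := by
  classical
  obtain ⟨⟨k, q⟩, hkq⟩ := finProdFinEquiv.surjective (⟨i - ρ, by lia⟩ : Fin (ℓ * a))
  have hi_eq : ρ + a * k + q = i := by
    have := congrArg Fin.val hkq
    rw [finProdFinEquiv_apply_val] at this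
    lia
  have hmiddle : window c ((ℓ + 1) * a) (ρ - (ℓ + 1) * a) = 0 := funext fun j => hc _ (by lia)
  have hleft : window c (a * (k + 1)) a = 0 := funext fun p => hc _ <| by
    have hk := mul_succ_add_le a k
    lia
  have hblock := blocks_eq_zero_of_hammingNorm_le hρ hZ hker hmiddle k <| by
    simpa [hleft] using hammingNorm_le_card_fintype (x := window c (ρ + a * k) a)
  exact hi_eq ▸ congrFun hblock.2 q

end Recovery

theorem isDelayRecoverable_ker {F : Type*} [Field F] {a ℓ τ : ℕ} {ha : 0 < a}
    {Z : Matrix (Fin a) (Fin (2 * a)) F}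
    {C : Matrix (Fin ((ℓ + 1) * a)) (Fin (τ + 1 - (ℓ + 1) * a)) F}
    (hτ : a + (ℓ + 1) * a ≤ τ + 1) (hband : IsZeroBand Z) (hZ : IsMDSGenerator Z)
    (hC : IsSuperregular C) :
    IsDelayRecoverable a ((ℓ + 1) * a) τ
      {v | constructionOneH F a (ℓ + 1) (τ + 1) ha (leftHalf Z) (rightHalf Z) C *ᵥ v = 0} := by
  intro i T hT_ge hT v hv hv_zero
  have hρ : (ℓ + 1) * a ≤ τ + 1 := by lia
  let c : ℕ → F := extendByZero v
  have hker : (constructionOneH F a (ℓ + 1) (τ + 1) ha (leftHalf Z) (rightHalf Z) C *ᵥ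
      fun k => c k) = 0 := by simpa [c] using hv
  have hc : ∀ j < i + (τ + 1), j ∉ T.map Fin.valEmbedding → c j = 0 := by
    intro j hj hjT
    by_cases hjn : j < τ + 1 - a + (ℓ + 1) * a
    · simpa [c, extendByZero, hjn] using
        hv_zero ⟨j, hjn⟩ (by grind) fun hmem => hjT (Finset.mem_map_of_mem _ hmem)
    · simp [c, extendByZero, hjn]
  suffices c i = 0 by simpa [c] using this
  rcases lt_or_ge (i : ℕ) (τ + 1) with hi | hi
  · rcases hT with hcard | hburst
    · exact apply_eq_zero_of_card_le hρ hZ hC hker hi (by simpa using hcard) hc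
    · refine apply_eq_zero_of_burst hτ hband hZ hC hker hi fun j hj hjT =>
        hc j hj fun hmem => hjT ?_
      obtain ⟨j', hj', rfl⟩ := Finset.mem_map.1 hmem
      exact Finset.mem_Ico.2 ⟨hT_ge j' hj', hburst j' hj'⟩
  · refine apply_eq_zero_of_forall_lt hρ hZ hker hi ?_ fun j hj => hc j (by lia) fun hmem => ?_
    · have := Nat.succ_mul ℓ a
      lia
    · obtain ⟨j', hj', rfl⟩ := Finset.mem_map.1 hmem
      exact hj.not_ge (hT_ge j' hj')

end constructionOneH

/-- For `a | b` (`b = ℓa`) and `τ+1 ≥ a+b`, the diagonal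
embedding (SDE with `N = n` and `S = {0,…,n−1}`) of the code `C_{a,b,τ+1}`
of Construction 1 (with `ρ = τ+1`, `r = b`, `n = τ+1−a+b`, `k = τ+1−a`) is an
`(a,b,τ)` streaming code of optimal rate `(τ+1−a)/(τ+1−a+b)`. -/
theorem de_constructionOne_is_streaming_code
    (F : Type*) [Field F] (a b τ ℓ : ℕ)
    (ha : 0 < a) (hab : a ≤ b) (hbτ : b ≤ τ)
    (hb : b = ℓ * a) (hτab : a + b ≤ τ + 1)
    (Z : Matrix (Fin a) (Fin (2 * a)) F)
    (hZband : ∀ (i : Fin a) (j : Fin (2 * a)),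
        (∃ s : ℕ, 1 ≤ s ∧ s ≤ a - 1 ∧ (j : ℕ) = ((i : ℕ) + s) % (2 * a)) → Z i j = 0)
    (hZMDS : ∀ cols : Finset (Fin (2 * a)), cols.card = a →
        LinearIndependent F (fun j : cols => fun u => Z u (j : Fin (2 * a))))
    (Z1 Z2 : Matrix (Fin a) (Fin a) F)
    (hZ1 : ∀ (i j : Fin a), Z1 i j = Z i ⟨(j : ℕ), by have := j.isLt; omega⟩)
    (hZ2 : ∀ (i j : Fin a), Z2 i j = Z i ⟨a + (j : ℕ), by have := j.isLt; omega⟩)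
    (C : Matrix (Fin (ℓ * a)) (Fin (τ + 1 - ℓ * a)) F)
    (hC : ∀ (s : ℕ) (ri : Fin s → Fin (ℓ * a)) (ci : Fin s → Fin (τ + 1 - ℓ * a)),
        Function.Injective ri → Function.Injective ci →
        (C.submatrix ri ci).det ≠ 0) :
    -- the diagonal embedding of ker H is an (a,b,τ) streaming code
    (∀ (t : ℤ) (E : Finset ℤ), (↑E ⊆ Set.Icc t (t + (τ : ℤ))) → t ∈ E →
        (E.card ≤ a ∨ ∀ e ∈ E, e ≤ t + (b : ℤ) - 1) →
        ∀ x y : ℤ → (Fin (τ + 1 - a + ℓ * a) → F),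
          (∀ s : ℤ,
              (constructionOneH F a ℓ (τ + 1) ha Z1 Z2 C).mulVec
                (fun i => x (s + ((i : ℕ) : ℤ)) i) = 0) →
          (∀ s : ℤ,
              (constructionOneH F a ℓ (τ + 1) ha Z1 Z2 C).mulVec
                (fun i => y (s + ((i : ℕ) : ℤ)) i) = 0) →
          (∀ t' : ℤ, t' < t → x t' = y t') →
          (∀ t' : ℤ, t' ∈ Set.Icc t (t + (τ : ℤ)) → t' ∉ E → x t' = y t') →
          x t = y t)
    ∧
    -- the rate k/n is the optimal rate (τ+1−a)/(τ+1−a+b)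
    ((τ + 1 - a : ℕ) : ℚ) / ((τ + 1 - a + ℓ * a : ℕ) : ℚ)
      = ((τ + 1 - a : ℕ) : ℚ) / ((τ + 1 - a + b : ℕ) : ℚ) := by
  refine ⟨?_, by rw [hb]⟩
  obtain ⟨ℓ, rfl⟩ : ∃ k, ℓ = k + 1 := Nat.exists_eq_add_one.2 (by by_contra h; grind)
  subst hb
  obtain rfl : Z1 = leftHalf Z := Matrix.ext hZ1
  obtain rfl : Z2 = rightHalf Z := Matrix.ext hZ2
  have hrecover := constructionOneH.isDelayRecoverable_ker (ha := ha) hτab hZband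
    (fun cols hcols => hZMDS cols (by simpa using hcols)) hC
  intro t E hE ht hEab x y hx hy
  let H := constructionOneH F a (ℓ + 1) (τ + 1) ha (leftHalf Z) (rightHalf Z) C
  exact IsDelayRecoverable.isStreamingCode_diagonalEmbedding
    (D := (LinearMap.ker H.mulVecLin).toAddSubgroup) hrecover t E hE ht hEab x hx y hy
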